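/- For n >= 1, the number of ascent sequences of length n avoiding the three patterns 0101, 0112, and 0121 equals 2^n - n. -/

import Mathlib

/-- Number of ascents of a sequence (list) of natural numbers. -/
def asc (l : List ℕ) : ℕ :=
  ((List.range (l.length - 1)).filter (fun j => l.getD j 0 < l.getD (j + 1) 0)).length

/-- `x` is an ascent sequence: nonempty, starts with 0, and each later entry is
at most one more than the number of ascents of the preceding prefix. -/
def IsAscSeq (x : List ℕ) : Prop :=
  x ≠ [] ∧ x.getD 0 0 = 0 ∧
    ∀ i, 1 ≤ i → i < x.length → x.getD i 0 ≤ 1 + asc (x.take i)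

/-- `x` contains the pattern `p`: some subsequence of `x` is order-isomorphic
(including equalities) to `p`, i.e. its reduction equals `p`. -/
def Contains (p x : List ℕ) : Prop :=
  ∃ y : List ℕ, y.Sublist x ∧ y.length = p.length ∧
    ∀ i j, i < p.length → j < p.length →
      (y.getD i 0 < y.getD j 0 ↔ p.getD i 0 < p.getD j 0)

/-- `x` avoids the pattern `p`. -/
def Avoids (p x : List ℕ) : Prop := ¬ Contains p x

theorem snoc_sub (l x : List ℕ) (d v : ℕ) :
    (l ++ [d]).Sublist (x ++ [v]) ↔ (l ++ [d]).Sublist x ∨ (d = v ∧ l.Sublist x) := by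
  rw [← List.reverse_sublist, ← List.reverse_sublist (l₁ := l ++ [d]) (l₂ := x),
    ← List.reverse_sublist (l₁ := l) (l₂ := x)]
  simp only [List.reverse_append, List.reverse_cons, List.reverse_nil, List.nil_append,
    List.singleton_append]
  rw [List.cons_sublist_cons']

theorem sub1 (a v : ℕ) (x : List ℕ) : [a].Sublist (x ++ [v]) ↔ [a].Sublist x ∨ a = v := by
  simpa using snoc_sub [] x a v
theorem sub2 (a b v : ℕ) (x : List ℕ) :
    [a, b].Sublist (x ++ [v]) ↔ [a, b].Sublist x ∨ (b = v ∧ [a].Sublist x) :=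
  snoc_sub [a] x b v
theorem sub3 (a b c v : ℕ) (x : List ℕ) :
    [a, b, c].Sublist (x ++ [v]) ↔ [a, b, c].Sublist x ∨ (c = v ∧ [a, b].Sublist x) :=
  snoc_sub [a, b] x c v
theorem sub4 (a b c d v : ℕ) (x : List ℕ) :
    [a, b, c, d].Sublist (x ++ [v]) ↔ [a, b, c, d].Sublist x ∨ (d = v ∧ [a, b, c].Sublist x) :=
  snoc_sub [a, b, c] x d v

theorem len4 (y : List ℕ) (h : y.length = 4) : ∃ a b c d, y = [a, b, c, d] := by
  match y, h with
  | [a, b, c, d], _ => exact ⟨a, b, c, d, rfl⟩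

theorem c0101 (x : List ℕ) :
    Contains [0, 1, 0, 1] x ↔ ∃ a b, a < b ∧ [a, b, a, b].Sublist x := by
  constructor
  · rintro ⟨y, hs, hl, h⟩
    obtain ⟨a, b, c, d, rfl⟩ := len4 y hl
    have h1 := h 0 1 (by simp) (by simp)
    have h2 := h 0 2 (by simp) (by simp)
    have h3 := h 2 0 (by simp) (by simp)
    have h4 := h 1 3 (by simp) (by simp)
    have h5 := h 3 1 (by simp) (by simp)
    simp at h1 h2 h3 h4 h5
    obtain rfl : a = c := by omega
    obtain rfl : b = d := by omega
    exact ⟨a, b, h1, hs⟩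
  · rintro ⟨a, b, h, hs⟩
    refine ⟨_, hs, rfl, ?_⟩
    intro i j hi hj
    simp at hi hj
    interval_cases i <;> interval_cases j <;> simp <;> omega

theorem c0112 (x : List ℕ) :
    Contains [0, 1, 1, 2] x ↔ ∃ a b c, a < b ∧ b < c ∧ [a, b, b, c].Sublist x := by
  constructor
  · rintro ⟨y, hs, hl, h⟩
    obtain ⟨a, b, c, d, rfl⟩ := len4 y hl
    have h1 := h 0 1 (by simp) (by simp)
    have h2 := h 1 2 (by simp) (by simp)
    have h3 := h 2 1 (by simp) (by simp)
    have h4 := h 1 3 (by simp) (by simp)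
    simp at h1 h2 h3 h4
    obtain rfl : b = c := by omega
    exact ⟨a, b, d, h1, h4, hs⟩
  · rintro ⟨a, b, c, h, h', hs⟩
    refine ⟨_, hs, rfl, ?_⟩
    intro i j hi hj
    simp at hi hj
    interval_cases i <;> interval_cases j <;> simp <;> omega

theorem c0121 (x : List ℕ) :
    Contains [0, 1, 2, 1] x ↔ ∃ a b c, a < b ∧ b < c ∧ [a, b, c, b].Sublist x := by
  constructor
  · rintro ⟨y, hs, hl, h⟩
    obtain ⟨a, b, c, d, rfl⟩ := len4 y hl
    have h1 := h 0 1 (by simp) (by simp)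
    have h2 := h 1 2 (by simp) (by simp)
    have h3 := h 3 1 (by simp) (by simp)
    have h4 := h 1 3 (by simp) (by simp)
    simp at h1 h2 h3 h4
    obtain rfl : b = d := by omega
    exact ⟨a, b, c, h1, h2, hs⟩
  · rintro ⟨a, b, c, h, h', hs⟩
    refine ⟨_, hs, rfl, ?_⟩
    intro i j hi hj
    simp at hi hj
    interval_cases i <;> interval_cases j <;> simp <;> omega

theorem asc_snoc (x : List ℕ) (w v : ℕ) :
    asc (x ++ [w] ++ [v]) = asc (x ++ [w]) + if w < v then 1 else 0 := by
  unfold asc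
  simp only [List.length_append, List.length_singleton, Nat.add_sub_cancel]
  rw [List.range_succ, List.filter_append, List.length_append]
  congr 1
  · congr 1
    apply List.filter_congr
    intro j hj
    simp at hj
    rw [List.getD_append _ _ _ j (by simp; omega), List.getD_append _ _ _ (j+1) (by simp; omega)]
  · have h1 : (x ++ [w] ++ [v]).getD x.length 0 = w := by simp
    have h2 : (x ++ [w] ++ [v]).getD (x.length + 1) 0 = v := by simp
    rw [List.filter_singleton, h1, h2]
    by_cases h : w < v <;> simp [h]

theorem isasc_snoc (x : List ℕ) (v : ℕ) (hx : x ≠ []) :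
    IsAscSeq (x ++ [v]) ↔ IsAscSeq x ∧ v ≤ 1 + asc x := by
  have hp : 0 < x.length := List.length_pos_iff.2 hx
  unfold IsAscSeq
  constructor
  · rintro ⟨-, h0, h⟩
    refine ⟨⟨hx, ?_, ?_⟩, ?_⟩
    · rwa [List.getD_append _ _ _ _ hp] at h0
    · intro i hi hi'
      have := h i hi (by simp; omega)
      rwa [List.getD_append _ _ _ _ hi', List.take_append_of_le_length hi'.le] at this
    · have := h x.length hp (by simp)
      simpa using this
  · rintro ⟨⟨-, h0, h⟩, hv⟩
    refine ⟨by simp, ?_, ?_⟩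
    · rwa [List.getD_append _ _ _ _ hp]
    · intro i hi hi'
      simp at hi'
      rcases Nat.lt_or_eq_of_le hi' with h' | rfl
      · rw [List.getD_append _ _ _ _ h', List.take_append_of_le_length h'.le]
        exact h i hi h'
      · simpa using hv

inductive St | A | B | R | Z

def Valid (x : List ℕ) : Prop :=
  IsAscSeq x ∧ Avoids [0, 1, 0, 1] x ∧ Avoids [0, 1, 1, 2] x ∧ Avoids [0, 1, 2, 1] x

theorem valid_snoc (x : List ℕ) (v : ℕ) (hx : x ≠ []) :
    Valid (x ++ [v]) ↔ Valid x ∧ v ≤ 1 + asc x ∧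
      (∀ a, a < v → ¬ [a, v, a].Sublist x) ∧
      (∀ a b, a < b → b < v → ¬ [a, b, b].Sublist x) ∧
      (∀ a c, a < v → v < c → ¬ [a, v, c].Sublist x) := by
  unfold Valid Avoids
  rw [isasc_snoc x v hx]
  simp only [c0101, c0112, c0121, sub4]
  constructor
  · rintro ⟨⟨h1, h2⟩, h3, h4, h5⟩
    refine ⟨⟨h1, ?_, ?_, ?_⟩, h2, ?_, ?_, ?_⟩
    · rintro ⟨a, b, p, q⟩; exact h3 ⟨a, b, p, .inl q⟩
    · rintro ⟨a, b, c, p, p', q⟩; exact h4 ⟨a, b, c, p, p', .inl q⟩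
    · rintro ⟨a, b, c, p, p', q⟩; exact h5 ⟨a, b, c, p, p', .inl q⟩
    · intro a p q; exact h3 ⟨a, v, p, .inr ⟨rfl, q⟩⟩
    · intro a b p p' q; exact h4 ⟨a, b, v, p, p', .inr ⟨rfl, q⟩⟩
    · intro a c p p' q; exact h5 ⟨a, v, c, p, p', .inr ⟨rfl, q⟩⟩
  · rintro ⟨⟨h1, h2, h3, h4⟩, h5, h6, h7, h8⟩
    refine ⟨⟨h1, h5⟩, ?_, ?_, ?_⟩
    · rintro ⟨a, b, p, q | ⟨rfl, q⟩⟩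
      · exact h2 ⟨a, b, p, q⟩
      · exact h6 a p q
    · rintro ⟨a, b, c, p, p', q | ⟨rfl, q⟩⟩
      · exact h3 ⟨a, b, c, p, p', q⟩
      · exact h7 a b p p' q
    · rintro ⟨a, b, c, p, p', q | ⟨rfl, q⟩⟩
      · exact h4 ⟨a, b, c, p, p', q⟩
      · exact h8 a c p p' q

def isE : St → Prop
  | .A => True
  | .B => True
  | _ => False
def isz : St → Prop
  | .A => True
  | .Z => True
  | _ => False

structure Ivt (s : St) (k : ℕ) (x : List ℕ) : Prop where
  val : Valid x
  asc : asc x = k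
  le : ∀ a, [a].Sublist x → a ≤ k
  z : [0].Sublist x
  z1 : ∀ v, 0 < v → v ≤ k → [0, v].Sublist x
  z2 : ∀ v, 0 < v → v < k → [0, v, k].Sublist x
  nb : ∀ b, 0 < b → b < k → ¬ [b, b].Sublist x
  e : isE s → 0 < k → ¬ [k, k].Sublist x
  ne : ¬ isE s → 0 < k ∧ [0, k, k].Sublist x
  l0 : isz s → (∃ y, x = y ++ [0]) ∧ (0 < k → [0, k, 0].Sublist x)
  l1 : ¬ isz s → 0 < k ∧ (∃ y, x = y ++ [k]) ∧ ∀ a, a < k → ¬ [k, a].Sublist x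

def nxt : St → ℕ → List (St × ℕ × ℕ)
  | .A, k => [(.A, k, 0), (.B, k+1, k+1)]
  | .B, k => [(.A, k, 0), (.R, k, k), (.B, k+1, k+1)]
  | .R, k => [(.Z, k, 0), (.R, k, k)]
  | .Z, k => [(.Z, k, 0)]

theorem sub_of1 {a b : ℕ} {x : List ℕ} (h : [a, b].Sublist x) : [a].Sublist x ∧ [b].Sublist x :=
  ⟨List.Sublist.trans (by simp) h, List.Sublist.trans (by simp) h⟩
theorem sub_of2 {a b c : ℕ} {x : List ℕ} (h : [a, b, c].Sublist x) :
    [a, b].Sublist x ∧ [b, c].Sublist x :=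
  ⟨List.Sublist.trans (by simp) h, List.Sublist.trans (by simp) h⟩

theorem Ivt.ne_nil {s k x} (h : Ivt s k x) : x ≠ [] := h.val.1.1

open Classical in
theorem Ivt.asc_snoc {s k x} (h : Ivt s k x) (v : ℕ) : _root_.asc (x ++ [v]) =
    k + if isz s ∧ 0 < v ∨ k < v then 1 else 0 := by
  by_cases hs : isz s
  · obtain ⟨⟨y, rfl⟩, -⟩ := h.l0 hs
    rw [_root_.asc_snoc, h.asc]
    have : 0 ≤ k := Nat.zero_le _
    simp only [hs, true_and]
    congr 2
    apply propext; omega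
  · obtain ⟨h0, ⟨y, rfl⟩, -⟩ := h.l1 hs
    rw [_root_.asc_snoc, h.asc]
    simp [hs]

theorem Ivt.complete {s k x} (h : Ivt s k x) (v : ℕ) (hv : Valid (x ++ [v])) :
    ∃ t ∈ nxt s k, t.2.2 = v := by
  obtain ⟨h1, h2, h3, h4, h5⟩ := (valid_snoc x v h.ne_nil).1 hv
  obtain ⟨val, asc, le, z, z1, z2, nb, e, ne, l0, l1⟩ := h
  have hk : v ≤ k + 1 := by omega
  have hlt : ¬ (0 < v ∧ v < k) := fun ⟨p, q⟩ => h5 0 k p q (z2 v p q)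
  rcases Nat.eq_zero_or_pos v with rfl | hp
  · cases s <;> simp [nxt]
  have hv2 : v = k ∨ v = k + 1 := by omega
  rcases hv2 with rfl | rfl
  · have hz : ¬ isz s := fun hz => h3 0 hp ((l0 hz).2 hp)
    cases s <;> simp [nxt, isz] at hz ⊢
  · have he : isE s := by
      by_contra he
      exact h4 0 k (ne he).1 (by omega) (ne he).2
    cases s <;> simp [nxt, isE] at he ⊢

set_option maxHeartbeats 1000000 in
theorem Ivt.sound {s k x} (h : Ivt s k x) (t) (ht : t ∈ nxt s k) :
    Ivt t.1 t.2.1 (x ++ [t.2.2]) := by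
  have key : (t.2.2 = 0 ∧ t.2.1 = k ∧ isz t.1 ∧ (isE t.1 ↔ isE s)) ∨
      (t.2.2 = k ∧ t.2.1 = k ∧ ¬ isz s ∧ ¬ isz t.1 ∧ ¬ isE t.1) ∨
      (t.2.2 = k + 1 ∧ t.2.1 = k + 1 ∧ isE s ∧ isE t.1 ∧ ¬ isz t.1) := by
    cases s <;> simp [nxt] at ht <;> rcases ht with rfl | rfl | rfl <;> simp [isE, isz]
  obtain ⟨s', k', v⟩ := t
  have ha := h.asc_snoc v
  have hvs := (valid_snoc x v h.ne_nil)
  obtain ⟨val, asc, le, z, z1, z2, nb, e, ne, l0, l1⟩ := h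
  simp only at key ⊢
  rcases key with ⟨rfl, rfl, hz, he⟩ | ⟨rfl, rfl, hz, hz', he⟩ | ⟨rfl, rfl, he, he', hz⟩
  · constructor
    · refine hvs.2 ⟨val, by omega, ?_, ?_, ?_⟩ <;> intros <;> omega
    · simp [ha]
    · intro a; rw [sub1]; grind
    · rw [sub1]; grind
    · intro v; rw [sub2]; grind
    · intro v; rw [sub3]; grind
    · intro v; rw [sub2]; grind
    · rw [sub2]; grind
    · rw [sub3]; grind
    · intro _; refine ⟨⟨_, rfl⟩, ?_⟩; rw [sub3]; grind
    · exact fun h => absurd hz h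
  · obtain ⟨hp, -, hl⟩ := l1 hz
    constructor
    · refine hvs.2 ⟨val, by omega, ?_, ?_, ?_⟩
      · intro a h1 h2; exact hl a h1 (sub_of2 h2).2
      · intro a b h1 h2 h3; exact nb b (by omega) h2 (sub_of2 h3).2
      · intro a c h1 h2 h3; have := le c (sub_of1 (sub_of2 h3).2).2; omega
    · simp [ha, hz]
    · intro a; rw [sub1]; grind
    · rw [sub1]; grind
    · intro v; rw [sub2]; grind
    · intro v; rw [sub3]; grind
    · intro v; rw [sub2]; grind
    · exact fun h => absurd h he
    · rw [sub3]; grind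
    · exact fun h => absurd h hz'
    · intro _; refine ⟨hp, ⟨_, rfl⟩, ?_⟩
      intro a; rw [sub2]; grind
  · have hn : ∀ l, (k + 1) ∈ l → ¬ List.Sublist l x := fun l hl hs => by
      have := le (k+1) (List.singleton_sublist.2 (hs.subset hl)); omega
    have nb' : ∀ b, 0 < b → b < k + 1 → ¬ [b, b].Sublist x := by
      intro b h1 h2
      rcases Nat.lt_succ_iff_lt_or_eq.1 h2 with h | rfl
      · exact nb b h1 h
      · exact e he h1
    constructor
    · refine hvs.2 ⟨val, by omega, ?_, ?_, ?_⟩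
      · intro a h1; apply hn; simp
      · intro a b h1 h2 h3; exact nb' b (by omega) h2 (sub_of2 h3).2
      · intro a c h1 h2; apply hn; simp
    · simp [ha]
    · intro a; rw [sub1]; grind
    · rw [sub1]; grind
    · intro v; rw [sub2]; grind
    · intro v; rw [sub3]; grind
    · intro v; rw [sub2]; grind
    · intro _ _; rw [sub2]
      have h1 := hn [k+1] (by simp)
      have h2 := hn [k+1, k+1] (by simp)
      rintro (q | ⟨-, q⟩)
      · exact h2 q
      · exact h1 q
    · exact fun h => absurd he' h
    · exact fun h => absurd h hz
    · intro _; refine ⟨by omega, ⟨_, rfl⟩, ?_⟩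
      intro a _; rw [sub2]
      have h1 := hn [k+1] (by simp)
      have h2 := hn [k+1, a] (by simp)
      rintro (q | ⟨-, q⟩)
      · exact h2 q
      · exact h1 q

theorem Ivt.base : Ivt .A 0 [0] := by
  constructor
  · refine ⟨⟨by simp, by simp, by intro i h1 h2; simp at h2; omega⟩, ?_, ?_, ?_⟩ <;> rintro ⟨y, hs, hl, -⟩ <;>
      have := hs.length_le <;> simp at this hl <;> omega
  · rfl
  · simp
  · simp
  · intros; omega
  · intros; omega
  · intros; omega
  · intros; omega
  · simp [isE]
  · exact fun _ => ⟨⟨[], rfl⟩, by simp⟩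
  · simp [isz]

def L : ℕ → List (St × ℕ × List ℕ)
  | 0 => [(.A, 0, [0])]
  | n+1 => (L n).flatMap fun t => (nxt t.1 t.2.1).map fun u => (u.1, u.2.1, t.2.2 ++ [u.2.2])

theorem L_inv (n : ℕ) : ∀ t ∈ L n, Ivt t.1 t.2.1 t.2.2 ∧ t.2.2.length = n + 1 := by
  induction n with
  | zero => simpa [L] using Ivt.base
  | succ n ih =>
    intro t ht
    simp only [L, List.mem_flatMap, List.mem_map] at ht
    obtain ⟨t', h1, u, hu, rfl⟩ := ht
    exact ⟨(ih t' h1).1.sound u hu, by simp [(ih t' h1).2]⟩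

theorem L_complete (n : ℕ) : ∀ x, x.length = n + 1 → Valid x → ∃ t ∈ L n, t.2.2 = x := by
  induction n with
  | zero =>
    intro x hx hv
    obtain ⟨a, rfl⟩ := List.length_eq_one_iff.1 hx
    have := hv.1.2.1
    simp at this
    simp [L, this]
  | succ n ih =>
    intro x hx hv
    rcases List.eq_nil_or_concat x with rfl | ⟨y, v, rfl⟩
    · simp at hx
    · rw [List.concat_eq_append] at hx hv ⊢
      simp only [List.length_append, List.length_singleton] at hx
      have hy : y ≠ [] := by rintro rfl; simp at hx
      obtain ⟨t, ht, rfl⟩ := ih y (by omega) ((valid_snoc y v hy).1 hv).1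
      obtain ⟨u, hu, rfl⟩ := (L_inv n t ht).1.complete v hv
      refine ⟨(u.1, u.2.1, t.2.2 ++ [u.2.2]), ?_, rfl⟩
      simp only [L, List.mem_flatMap, List.mem_map]
      exact ⟨t, ht, u, hu, rfl⟩

theorem L_nodup (n : ℕ) : ((L n).map (fun t => t.2.2)).Nodup := by
  induction n with
  | zero => simp [L]
  | succ n ih =>
    simp only [L, List.map_flatMap, List.map_map]
    rw [List.nodup_flatMap]
    constructor
    · rintro ⟨s, k, x⟩ ht
      have hi := (L_inv n _ ht).1.l1
      cases s <;> simp [nxt, isz] at hi ⊢ <;> omega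
    · rw [List.Nodup, List.pairwise_map] at ih
      refine ih.imp ?_
      intro a b hab y h1 h2
      simp only [List.mem_map, Function.comp] at h1 h2
      obtain ⟨u, -, rfl⟩ := h1
      obtain ⟨u', -, h⟩ := h2
      exact hab (List.append_inj' h rfl).1.symm

def cnt (s : St) : St → ℕ
  | t => match s, t with
    | .A, .A => 1
    | .B, .B => 1
    | .R, .R => 1
    | .Z, .Z => 1
    | _, _ => 0

theorem cnt_step (l : List (St × ℕ × List ℕ)) :
    let l' := l.flatMap fun t => (nxt t.1 t.2.1).map fun u => (u.1, u.2.1, t.2.2 ++ [u.2.2])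
    let c := fun (l : List (St × ℕ × List ℕ)) s => (l.map (fun t => cnt s t.1)).sum
    c l' .A = c l .A + c l .B ∧ c l' .B = c l .A + c l .B ∧ c l' .R = c l .B + c l .R ∧
    c l' .Z = c l .R + c l .Z ∧ l.length = c l .A + c l .B + c l .R + c l .Z := by
  induction l with
  | nil => simp
  | cons a l ih =>
    obtain ⟨s, k, x⟩ := a
    simp only [List.flatMap_cons, List.map_append, List.sum_append, List.map_cons, List.sum_cons,
      List.length_cons] at ih ⊢
    obtain ⟨h1, h2, h3, h4, h5⟩ := ih
    rw [h1, h2, h3, h4, h5]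
    cases s <;> simp [nxt, cnt] <;> omega

theorem L_cnt (n : ℕ) : 
    let c := fun s => ((L (n+1)).map (fun t => cnt s t.1)).sum
    c .A = 2 ^ n ∧ c .B = 2 ^ n ∧ c .R + 1 = 2 ^ n ∧ c .Z + n + 1 = 2 ^ n := by
  induction n with
  | zero => simp [L, nxt, cnt]
  | succ n ih =>
    have := cnt_step (L (n+1))
    simp only at ih this ⊢
    rw [L]
    obtain ⟨h1, h2, h3, h4, h5⟩ := this
    rw [h1, h2, h3, h4, pow_succ]
    omega

theorem L_len (n : ℕ) : (L n).length = 2 ^ (n + 1) - (n + 1) := by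
  cases n with
  | zero => simp [L]
  | succ n =>
    have h := (cnt_step (L (n+1))).2.2.2.2
    have := L_cnt n
    simp only at this h
    rw [h, pow_succ, pow_succ]
    omega

theorem stmt_13 (n : ℕ) (hn : 1 ≤ n) :
    Nat.card {x : List ℕ // x.length = n ∧ IsAscSeq x ∧ Avoids [0, 1, 0, 1] x ∧ Avoids [0, 1, 1, 2] x ∧ Avoids [0, 1, 2, 1] x} = 2 ^ n - n := by
  obtain ⟨m, rfl⟩ : ∃ m, n = m + 1 := ⟨n - 1, by omega⟩
  rw [← L_len m, ← List.length_map (f := fun t : St × ℕ × List ℕ => t.2.2),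
    ← List.toFinset_card_of_nodup (L_nodup m)]
  apply Nat.subtype_card
  intro x
  simp only [List.mem_toFinset, List.mem_map]
  constructor
  · rintro ⟨t, ht, rfl⟩
    exact ⟨(L_inv m t ht).2, (L_inv m t ht).1.val⟩
  · rintro ⟨h1, h2⟩
    exact L_complete m x h1 h2
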